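/- arXiv:2202.09627 — 6 statements merged into one kernel-verified Lean document; each statement's English description precedes it below -/
import Mathlib

section
/- Let n be a positive natural number, Ω a preconnected subset of ((Fin n → ℝ) × Matrix (Fin n) (Fin n) ℝ), and λ : ((Fin n → ℝ) × Matrix (Fin n) (Fin n) ℝ) → ℂ continuous on Ω with det(diagonal(fun j => (λ(α,A))^(α j : ℂ)) − A.map Complex.ofReal) = 0 for every (α, A) ∈ Ω. Assume that for every (α, A) ∈ Ω and every y : ℝ, det(diagonal(fun j => ((y : ℂ) * Complex.I)^(α j : ℂ)) − A.map Complex.ofReal) ≠ 0. If there exists one point (α₀, A₀) ∈ Ω with (λ(α₀,A₀)).re < 0, then (λ(α,A)).re < 0 for every (α, A) ∈ Ω. -/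
/-- Consequence of Theorem 2 of the paper: if one point of a preconnected region avoiding
the critical hyper-surface has a selected root with negative real part, then every point
of the region does. -/
theorem re_root_neg_of_one_point
    (n : ℕ) (hn : 0 < n)
    (Ω : Set ((Fin n → ℝ) × Matrix (Fin n) (Fin n) ℝ))
    (hΩ : IsPreconnected Ω)
    (lam : ((Fin n → ℝ) × Matrix (Fin n) (Fin n) ℝ) → ℂ)
    (hcont : ContinuousOn lam Ω)
    (hroot : ∀ p ∈ Ω,
      (Matrix.diagonal (fun j : Fin n => (lam p) ^ ((p.1 j : ℂ)))
        - p.2.map Complex.ofReal).det = 0)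
    (hcrit : ∀ p ∈ Ω, ∀ y : ℝ,
      (Matrix.diagonal (fun j : Fin n => ((y : ℂ) * Complex.I) ^ ((p.1 j : ℂ)))
        - p.2.map Complex.ofReal).det ≠ 0)
    (p₀ : (Fin n → ℝ) × Matrix (Fin n) (Fin n) ℝ) (hp₀ : p₀ ∈ Ω)
    (hneg : (lam p₀).re < 0) :
    ∀ p ∈ Ω, (lam p).re < 0 := by
  intro p hp
  by_contra hge
  have hge' : 0 ≤ (lam p).re := not_lt.mp hge
  have hre : ContinuousOn (fun q => (lam q).re) Ω :=
    Complex.continuous_re.comp_continuousOn hcont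
  obtain ⟨q, hq, hq0⟩ := hΩ.intermediate_value hp₀ hp hre ⟨hneg.le, hge'⟩
  have hq0' : (lam q).re = 0 := hq0
  have hl : (((lam q).im : ℂ) * Complex.I) = lam q := by
    apply Complex.ext <;> simp [hq0']
  have h := hcrit q hq (lam q).im
  rw [hl] at h
  exact h (hroot q hq)
end

section
/- Let γ, α, c, d, r be real numbers with r > 0, c ≠ 0, and sin((γ − α)·π/2) ≠ 0. If ((r : ℂ) * Complex.I)^(γ : ℂ) + c * ((r : ℂ) * Complex.I)^(α : ℂ) + d = 0, then r^γ = d * Real.sin (α * π / 2) / Real.sin ((γ − α) * π / 2) and r^α = −d * Real.sin (γ * π / 2) / (c * Real.sin ((γ − α) * π / 2)). -/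
open Real

lemma cpow_rI (r x : ℝ) (hr : 0 < r) :
    ((r : ℂ) * Complex.I) ^ (x : ℂ) =
      ((r ^ x : ℝ) : ℂ) * (((Real.cos (x * π / 2) : ℝ) : ℂ)
        + ((Real.sin (x * π / 2) : ℝ) : ℂ) * Complex.I) := by
  have h0 : (r : ℂ) * Complex.I ≠ 0 :=
    mul_ne_zero (Complex.ofReal_ne_zero.mpr hr.ne') Complex.I_ne_zero
  rw [Complex.cpow_def_of_ne_zero h0, Complex.log_ofReal_mul hr Complex.I_ne_zero,
    Complex.log_I, Real.rpow_def_of_pos hr, Complex.ofReal_exp, Complex.ofReal_cos,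
    Complex.ofReal_sin, ← Complex.exp_mul_I, ← Complex.exp_add]
  congr 1
  push_cast
  ring

/-- Eq. (26) of the paper (general form): if s = r·i is a root of s^γ + c·s^α + d = 0,
Cramer's rule determines r^γ and r^α. -/
theorem two_term_cramer (γ α c d r : ℝ) (hr : 0 < r) (hc : c ≠ 0)
    (hsin : Real.sin ((γ - α) * π / 2) ≠ 0)
    (hroot : ((r : ℂ) * Complex.I) ^ (γ : ℂ) + (c : ℂ) * ((r : ℂ) * Complex.I) ^ (α : ℂ)
      + (d : ℂ) = 0) :
    r ^ γ = d * Real.sin (α * π / 2) / Real.sin ((γ - α) * π / 2) ∧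
    r ^ α = -d * Real.sin (γ * π / 2) / (c * Real.sin ((γ - α) * π / 2)) := by
  rw [cpow_rI r γ hr, cpow_rI r α hr] at hroot
  generalize r ^ γ = A at *
  generalize r ^ α = B at *
  have hs : Real.sin ((γ - α) * π / 2) = Real.sin (γ * π / 2) * Real.cos (α * π / 2)
      - Real.cos (γ * π / 2) * Real.sin (α * π / 2) := by
    rw [← Real.sin_sub]
    congr 1
    ring
  generalize Real.sin ((γ - α) * π / 2) = S at *
  generalize Real.sin (γ * π / 2) = s1 at *
  generalize Real.cos (γ * π / 2) = c1 at *
  generalize Real.sin (α * π / 2) = s2 at *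
  generalize Real.cos (α * π / 2) = c2 at *
  have hre : A * c1 + c * (B * c2) + d = 0 := by
    simpa using congrArg Complex.re hroot
  have him : A * s1 + c * (B * s2) = 0 := by
    simpa using congrArg Complex.im hroot
  constructor
  · rw [eq_div_iff hsin, hs]
    linear_combination c2 * him - s2 * hre
  · rw [eq_div_iff (mul_ne_zero hc hsin), hs]
    linear_combination s1 * hre - c1 * him
end

section
/- Let α, β, a, b, r be real numbers with r > 0, a ≠ 0, and sin((β − α)·π/2) ≠ 0. If ((r : ℂ) * Complex.I)^(α : ℂ) − a * ((r : ℂ) * Complex.I)^(β : ℂ) + b = 0, then r^α = −b * Real.sin (β * π / 2) / Real.sin ((β − α) * π / 2) and r^β = −b * Real.sin (α * π / 2) / (a * Real.sin ((β − α) * π / 2)). -/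
open Real

lemma cpow_aux (r γ : ℝ) (hr : 0 < r) : ((r : ℂ) * Complex.I) ^ (γ : ℂ) =
    ((r ^ γ * Real.cos (γ * π / 2) : ℝ) : ℂ) +
      ((r ^ γ * Real.sin (γ * π / 2) : ℝ) : ℂ) * Complex.I := by
  have hne : (r : ℂ) * Complex.I ≠ 0 :=
    mul_ne_zero (by exact_mod_cast hr.ne') Complex.I_ne_zero
  rw [Complex.cpow_def_of_ne_zero hne, Complex.log_ofReal_mul hr Complex.I_ne_zero,
    Complex.log_I, Real.rpow_def_of_pos hr]
  have : ((Real.log r : ℂ) + π / 2 * Complex.I) * γ =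
      ((Real.log r * γ : ℝ) : ℂ) + ((γ * π / 2 : ℝ) : ℂ) * Complex.I := by
    push_cast; ring
  rw [this, Complex.exp_add, Complex.exp_mul_I, ← Complex.ofReal_exp, ← Complex.ofReal_cos,
    ← Complex.ofReal_sin]
  push_cast
  ring

/-- Eq. (26) in Example 1 of the paper (sign of r^α corrected): if s = r·i is a root of
s^α − a·s^β + b = 0, then r^α and r^β are determined. -/
theorem example1_cramer (α β a b r : ℝ) (hr : 0 < r) (ha : a ≠ 0)
    (hsin : Real.sin ((β - α) * π / 2) ≠ 0)
    (hroot : ((r : ℂ) * Complex.I) ^ (α : ℂ) - (a : ℂ) * ((r : ℂ) * Complex.I) ^ (β : ℂ)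
      + (b : ℂ) = 0) :
    r ^ α = -b * Real.sin (β * π / 2) / Real.sin ((β - α) * π / 2) ∧
    r ^ β = -b * Real.sin (α * π / 2) / (a * Real.sin ((β - α) * π / 2)) := by
  rw [cpow_aux r α hr, cpow_aux r β hr] at hroot
  have h1 := congrArg Complex.re hroot
  have h2 := congrArg Complex.im hroot
  simp only [Complex.add_re, Complex.sub_re, Complex.mul_re, Complex.add_im, Complex.sub_im,
    Complex.mul_im, Complex.ofReal_re, Complex.ofReal_im, Complex.I_re, Complex.I_im,
    Complex.zero_re, Complex.zero_im] at h1 h2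
  have hs : Real.sin ((β - α) * π / 2) = Real.sin (β * π / 2) * Real.cos (α * π / 2)
      - Real.cos (β * π / 2) * Real.sin (α * π / 2) := by
    rw [← Real.sin_sub]; congr 1; ring
  constructor
  · rw [eq_div_iff hsin, hs]
    linear_combination Real.sin (β * π / 2) * h1 - Real.cos (β * π / 2) * h2
  · rw [eq_div_iff (mul_ne_zero ha hsin), hs]
    linear_combination Real.sin (α * π / 2) * h1 - Real.cos (α * π / 2) * h2
end

section
/- Let α, β, a, b, r be real numbers with r > 0, a ≠ 0, and sin((β − α)·π/2) ≠ 0. Suppose ((r : ℂ) * Complex.I)^(α : ℂ) − a * ((r : ℂ) * Complex.I)^(β : ℂ) + b = 0. Set u := −b * Real.sin (β * π / 2) / Real.sin ((β − α) * π / 2) and v := −b * Real.sin (α * π / 2) / (a * Real.sin ((β − α) * π / 2)). Then u > 0, v > 0, and u^β = v^α (real powers). -/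
open Real

lemma aux_pow (r x : ℝ) (hr : 0 < r) : ((r : ℂ) * Complex.I) ^ (x : ℂ)
    = ((r ^ x * Real.cos (x * π / 2) : ℝ) : ℂ)
      + ((r ^ x * Real.sin (x * π / 2) : ℝ) : ℂ) * Complex.I := by
  have h0 : (r : ℂ) * Complex.I ≠ 0 :=
    mul_ne_zero (by exact_mod_cast hr.ne') Complex.I_ne_zero
  rw [Complex.cpow_def_of_ne_zero h0, Complex.log_ofReal_mul hr Complex.I_ne_zero, Complex.log_I,
    Real.rpow_def_of_pos hr]
  have : ((Real.log r : ℂ) + π / 2 * Complex.I) * x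
      = ((Real.log r * x : ℝ) : ℂ) + ((x * π / 2 : ℝ) : ℂ) * Complex.I := by
    push_cast; ring
  rw [this, Complex.exp_add, Complex.exp_mul_I]
  push_cast
  ring

/-- Eqs. (27)–(28) in Example 1 of the paper (signs corrected): eliminating r via
(r^α)^β = (r^β)^α yields the boundary equation of the stable parameter region. -/
theorem example1_boundary_necessity (α β a b r : ℝ) (hr : 0 < r) (ha : a ≠ 0)
    (hsin : Real.sin ((β - α) * π / 2) ≠ 0)
    (hroot : ((r : ℂ) * Complex.I) ^ (α : ℂ) - (a : ℂ) * ((r : ℂ) * Complex.I) ^ (β : ℂ)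
      + (b : ℂ) = 0) :
    0 < -b * Real.sin (β * π / 2) / Real.sin ((β - α) * π / 2) ∧
    0 < -b * Real.sin (α * π / 2) / (a * Real.sin ((β - α) * π / 2)) ∧
    (-b * Real.sin (β * π / 2) / Real.sin ((β - α) * π / 2)) ^ β
      = (-b * Real.sin (α * π / 2) / (a * Real.sin ((β - α) * π / 2))) ^ α := by
  rw [aux_pow r α hr, aux_pow r β hr] at hroot
  have hre := congrArg Complex.re hroot
  have him := congrArg Complex.im hroot
  simp only [Complex.add_re, Complex.sub_re, Complex.mul_re, Complex.ofReal_re, Complex.ofReal_im,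
    Complex.I_re, Complex.I_im, Complex.add_im, Complex.mul_im, Complex.sub_im,
    Complex.zero_re, Complex.zero_im] at hre him
  have hs : Real.sin ((β - α) * π / 2) = Real.sin (β * π / 2) * Real.cos (α * π / 2)
      - Real.cos (β * π / 2) * Real.sin (α * π / 2) := by
    rw [← Real.sin_sub]; congr 1; ring
  have hu : -b * Real.sin (β * π / 2) / Real.sin ((β - α) * π / 2) = r ^ α := by
    rw [div_eq_iff hsin, hs]
    linear_combination (-Real.sin (β * π / 2)) * hre + Real.cos (β * π / 2) * him
  have hv : -b * Real.sin (α * π / 2) / (a * Real.sin ((β - α) * π / 2)) = r ^ β := by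
    rw [div_eq_iff (mul_ne_zero ha hsin), hs]
    linear_combination (-Real.sin (α * π / 2)) * hre + Real.cos (α * π / 2) * him
  rw [hu, hv]
  refine ⟨Real.rpow_pos_of_pos hr _, Real.rpow_pos_of_pos hr _, ?_⟩
  rw [← Real.rpow_mul hr.le, ← Real.rpow_mul hr.le, mul_comm]
end

section
/- Let α, β, a, b be real numbers with α ≠ 0, a ≠ 0, and sin((β − α)·π/2) ≠ 0. Set u := −b * Real.sin (β * π / 2) / Real.sin ((β − α) * π / 2) and v := −b * Real.sin (α * π / 2) / (a * Real.sin ((β − α) * π / 2)). If u > 0, v > 0, and u^β = v^α (real powers), then there exists a real r > 0 such that ((r : ℂ) * Complex.I)^(α : ℂ) − a * ((r : ℂ) * Complex.I)^(β : ℂ) + b = 0. -/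
open Real

lemma cpow_imag_axis (r x : ℝ) (hr : 0 < r) :
    ((r : ℂ) * Complex.I) ^ (x : ℂ) =
      ((r ^ x : ℝ) : ℂ) * ((Real.cos (x * π / 2) : ℝ) + (Real.sin (x * π / 2) : ℝ) * Complex.I) := by
  have h0 : (r : ℂ) * Complex.I ≠ 0 := by
    simp [hr.ne']
  rw [Complex.cpow_def_of_ne_zero h0, Complex.log_ofReal_mul hr Complex.I_ne_zero, Complex.log_I,
    Real.rpow_def_of_pos hr]
  push_cast
  rw [← Complex.exp_mul_I, ← Complex.exp_add]
  congr 1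
  ring

/-- Converse direction of Example 1: parameter points satisfying the boundary equation with
both determined quantities positive admit a critical root on the positive imaginary axis. -/
theorem example1_boundary_sufficiency (α β a b : ℝ) (hα : α ≠ 0) (ha : a ≠ 0)
    (hsin : Real.sin ((β - α) * π / 2) ≠ 0)
    (hu : 0 < -b * Real.sin (β * π / 2) / Real.sin ((β - α) * π / 2))
    (hv : 0 < -b * Real.sin (α * π / 2) / (a * Real.sin ((β - α) * π / 2)))
    (heq : (-b * Real.sin (β * π / 2) / Real.sin ((β - α) * π / 2)) ^ β
      = (-b * Real.sin (α * π / 2) / (a * Real.sin ((β - α) * π / 2))) ^ α) :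
    ∃ r : ℝ, 0 < r ∧
      ((r : ℂ) * Complex.I) ^ (α : ℂ) - (a : ℂ) * ((r : ℂ) * Complex.I) ^ (β : ℂ)
        + (b : ℂ) = 0 := by
  have hsub : Real.sin ((β - α) * π / 2) = Real.sin (β * π / 2) * Real.cos (α * π / 2)
      - Real.cos (β * π / 2) * Real.sin (α * π / 2) := by
    rw [← Real.sin_sub]; congr 1; ring
  have h1 : (-b * Real.sin (β * π / 2) / Real.sin ((β - α) * π / 2)) * Real.sin ((β - α) * π / 2)
      = -b * Real.sin (β * π / 2) := div_mul_cancel₀ _ hsin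
  have h2 : (-b * Real.sin (α * π / 2) / (a * Real.sin ((β - α) * π / 2)))
      * (a * Real.sin ((β - α) * π / 2)) = -b * Real.sin (α * π / 2) :=
    div_mul_cancel₀ _ (mul_ne_zero ha hsin)
  generalize -b * Real.sin (β * π / 2) / Real.sin ((β - α) * π / 2) = u at *
  generalize -b * Real.sin (α * π / 2) / (a * Real.sin ((β - α) * π / 2)) = v at *
  have hr : 0 < u ^ (α⁻¹) := Real.rpow_pos_of_pos hu _
  refine ⟨u ^ (α⁻¹), hr, ?_⟩
  rw [cpow_imag_axis _ _ hr, cpow_imag_axis _ _ hr]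
  have e1 : (u ^ (α⁻¹)) ^ α = u := Real.rpow_inv_rpow hu.le hα
  have e2 : (u ^ (α⁻¹)) ^ β = v := by
    rw [← Real.rpow_mul hu.le, mul_comm, Real.rpow_mul hu.le, heq, Real.rpow_rpow_inv hv.le hα]
  rw [e1, e2]
  generalize Real.sin ((β - α) * π / 2) = S at *
  generalize Real.sin (α * π / 2) = sA at *
  generalize Real.sin (β * π / 2) = sB at *
  generalize Real.cos (α * π / 2) = cA at *
  generalize Real.cos (β * π / 2) = cB at *
  have re : u * cA - a * (v * cB) + b = 0 := by
    apply mul_right_cancel₀ hsin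
    linear_combination cA * h1 - cB * h2 + b * hsub
  have im : u * sA - a * (v * sB) = 0 := by
    apply mul_right_cancel₀ hsin
    linear_combination sA * h1 - sB * h2
  apply Complex.ext
  · simpa using re
  · simpa using im
end

section
/- Let α, β, r be real numbers with r > 0, sin(β·π/2) ≠ 0, and sin((α + β)·π/2) ≠ 0. If ((r : ℂ) * Complex.I)^((α + β : ℝ) : ℂ) + (1000/3) * ((r : ℂ) * Complex.I)^(α : ℂ) + 10000000/3 = 0, then r^α = −10000 * Real.sin ((α + β) * π / 2) / Real.sin (β * π / 2), r^β = −(1000/3) * Real.sin (α * π / 2) / Real.sin ((α + β) * π / 2), and consequently (−(1000/3) * Real.sin (α * π / 2) / Real.sin ((α + β) * π / 2))^α = (−10000 * Real.sin ((α + β) * π / 2) / Real.sin (β * π / 2))^β (real powers). -/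
open Real

theorem rI_cpow_aux (r w : ℝ) (hr : 0 < r) :
    ((r : ℂ) * Complex.I) ^ (w : ℂ)
      = ((r ^ w * Real.cos (w * π / 2) : ℝ) : ℂ)
        + ((r ^ w * Real.sin (w * π / 2) : ℝ) : ℂ) * Complex.I := by
  have hne : (r : ℂ) * Complex.I ≠ 0 :=
    mul_ne_zero (by exact_mod_cast hr.ne') Complex.I_ne_zero
  rw [Complex.cpow_def_of_ne_zero hne, Complex.log_ofReal_mul hr Complex.I_ne_zero,
    Complex.log_I, Real.rpow_def_of_pos hr]
  have : ((Real.log r : ℂ) + π / 2 * Complex.I) * (w : ℂ)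
      = ((Real.log r * w : ℝ) : ℂ) + ((w * π / 2 : ℝ) : ℂ) * Complex.I := by
    push_cast; ring
  rw [this, Complex.exp_add, Complex.exp_mul_I]
  push_cast
  ring

/-- Eq. (31) of the paper (signs corrected): the boundary equation of the stable parameter
region of the fractional-order boost converter system. -/
theorem boost_converter_boundary (α β r : ℝ) (hr : 0 < r)
    (hβ : Real.sin (β * π / 2) ≠ 0) (hαβ : Real.sin ((α + β) * π / 2) ≠ 0)
    (hroot : ((r : ℂ) * Complex.I) ^ (((α + β : ℝ)) : ℂ)
      + (1000/3) * ((r : ℂ) * Complex.I) ^ (α : ℂ) + 10000000/3 = 0) :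
    r ^ α = -10000 * Real.sin ((α + β) * π / 2) / Real.sin (β * π / 2) ∧
    r ^ β = -(1000/3) * Real.sin (α * π / 2) / Real.sin ((α + β) * π / 2) ∧
    (-(1000/3) * Real.sin (α * π / 2) / Real.sin ((α + β) * π / 2)) ^ α
      = (-10000 * Real.sin ((α + β) * π / 2) / Real.sin (β * π / 2)) ^ β := by
  rw [rI_cpow_aux r _ hr, rI_cpow_aux r _ hr] at hroot
  have hc : ((r ^ (α + β) * Real.cos ((α + β) * π / 2)
        + 1000 / 3 * (r ^ α * Real.cos (α * π / 2)) + 10000000 / 3 : ℝ) : ℂ)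
      + ((r ^ (α + β) * Real.sin ((α + β) * π / 2)
        + 1000 / 3 * (r ^ α * Real.sin (α * π / 2)) : ℝ) : ℂ) * Complex.I = 0 := by
    rw [← hroot]; push_cast; ring
  have hre := congrArg Complex.re hc
  have him := congrArg Complex.im hc
  simp only [Complex.add_re, Complex.add_im, Complex.re_ofReal_mul, Complex.im_ofReal_mul,
    Complex.ofReal_re, Complex.ofReal_im, Complex.I_re, Complex.I_im, Complex.zero_re,
    Complex.zero_im, mul_zero, mul_one, add_zero, zero_add] at hre him
  rw [Real.rpow_add hr] at hre him
  have hA : 0 < r ^ α := Real.rpow_pos_of_pos hr α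
  have hs : Real.sin (β * π / 2) = Real.sin ((α + β) * π / 2) * Real.cos (α * π / 2)
      - Real.cos ((α + β) * π / 2) * Real.sin (α * π / 2) := by
    rw [← Real.sin_sub]; congr 1; ring
  have h1 : r ^ α = -10000 * Real.sin ((α + β) * π / 2) / Real.sin (β * π / 2) := by
    rw [eq_div_iff hβ, hs]
    linear_combination (3 / 1000) * Real.sin ((α + β) * π / 2) * hre
      - (3 / 1000) * Real.cos ((α + β) * π / 2) * him
  have h2 : r ^ β = -(1000/3) * Real.sin (α * π / 2) / Real.sin ((α + β) * π / 2) := by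
    rw [eq_div_iff hαβ]
    apply mul_left_cancel₀ hA.ne'
    linear_combination him
  refine ⟨h1, h2, ?_⟩
  rw [← h1, ← h2, ← Real.rpow_mul hr.le, ← Real.rpow_mul hr.le, mul_comm]
end
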